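/- Let 𝒜 be drawn from the uniform probability measure on the set of adjacency matrices of d-regular graphs on N vertices (assumed nonempty), let i, j, k, l ∈ {1,…,N} be distinct indices, and let F be any real-valued function on symmetric N×N matrices. Then E[ F(𝒜) χ_{ij}^{kl}(𝒜) ] = E[ F(𝒜 + ξ_{ij}^{kl}) χ_{ik}^{jl}(𝒜) ]. -/

import Mathlib

open MeasureTheory Filter Matrix
open scoped ENNReal NNReal

noncomputable section

/-- `A` is the adjacency matrix of a `d`-regular graph on `N` vertices:
a symmetric `{0,1}`-matrix with zero diagonal and all row sums equal to `d`. -/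
def IsAdjMat (N d : ℕ) (A : Matrix (Fin N) (Fin N) ℝ) : Prop :=
  A.IsSymm ∧ (∀ i, A i i = 0) ∧ (∀ i j, A i j = 0 ∨ A i j = 1) ∧ ∀ i, ∑ j, A i j = d

/-- probability of an event under the uniform measure on `d`-regular graphs on `N` vertices. -/
def PrReg (N d : ℕ) (E : Matrix (Fin N) (Fin N) ℝ → Prop) : ℝ :=
  (Nat.card {A : Matrix (Fin N) (Fin N) ℝ // IsAdjMat N d A ∧ E A} : ℝ) /
    (Nat.card {A : Matrix (Fin N) (Fin N) ℝ // IsAdjMat N d A} : ℝ)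

/-- expectation of `F` under the uniform measure on `d`-regular graphs on `N` vertices. -/
def Ereg (N d : ℕ) (F : Matrix (Fin N) (Fin N) ℝ → ℝ) : ℝ :=
  (∑ᶠ A : {A : Matrix (Fin N) (Fin N) ℝ // IsAdjMat N d A}, F A.1) /
    (Nat.card {A : Matrix (Fin N) (Fin N) ℝ // IsAdjMat N d A} : ℝ)

/-- the `k`-th largest eigenvalue (`1`-based indexing) of a symmetric matrix. -/
def eigval {N : ℕ} (A : Matrix (Fin N) (Fin N) ℝ) (k : ℕ) : ℝ :=
  if hA : A.IsHermitian then
    if h : k - 1 < N then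
      hA.eigenvalues (Tuple.sort hA.eigenvalues (Fin.rev ⟨k - 1, h⟩))
    else 0
  else 0

/-- `q = √(d(N-d)/N)`. -/
def qval (N d : ℕ) : ℝ := Real.sqrt ((d : ℝ) * ((N : ℝ) - (d : ℝ)) / (N : ℝ))

/-- the projection `P⊥ = I - e eᵀ` (complex version). -/
def Pperp (N : ℕ) : Matrix (Fin N) (Fin N) ℂ := 1 - Matrix.of fun _ _ => (N : ℂ)⁻¹

/-- the projection `P⊥ = I - e eᵀ` (real version). -/
def PperpR (N : ℕ) : Matrix (Fin N) (Fin N) ℝ := 1 - Matrix.of fun _ _ => (N : ℝ)⁻¹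

/-- the Green function `G(z) = P⊥ (q⁻¹𝒜 - z)⁻¹ P⊥`. -/
def greenM (N d : ℕ) (A : Matrix (Fin N) (Fin N) ℝ) (z : ℂ) : Matrix (Fin N) (Fin N) ℂ :=
  Pperp N * (((qval N d : ℝ) : ℂ)⁻¹ • A.map Complex.ofReal - z • 1)⁻¹ * Pperp N

/-- the normalized trace `Ḡ(z) = N⁻¹ Tr G(z)`. -/
def gbar (N d : ℕ) (A : Matrix (Fin N) (Fin N) ℝ) (z : ℂ) : ℂ :=
  (N : ℂ)⁻¹ * (greenM N d A z).trace

/-- the Stieltjes transform of the semicircle density `ϱ(x) = (2π)⁻¹ √((4-x²)₊)`. -/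
def mSC (z : ℂ) : ℂ :=
  ∫ x in (-2 : ℝ)..2, ((Real.sqrt (4 - x ^ 2) / (2 * Real.pi) : ℝ) : ℂ) / ((x : ℂ) - z)

/-- `(Δ_{ij})_{xy} = δ_{ix}δ_{jy} + δ_{iy}δ_{jx}`. -/
def Dmat (N : ℕ) (i j : Fin N) : Matrix (Fin N) (Fin N) ℝ :=
  Matrix.of fun x y =>
    (if i = x ∧ j = y then (1 : ℝ) else 0) + (if i = y ∧ j = x then (1 : ℝ) else 0)

/-- `ξ_{ij}^{kl} = Δ_{ij} + Δ_{kl} - Δ_{ik} - Δ_{jl}`. -/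
def xiMat (N : ℕ) (i j k l : Fin N) : Matrix (Fin N) (Fin N) ℝ :=
  Dmat N i j + Dmat N k l - Dmat N i k - Dmat N j l

/-- `χ_{ij}^{kl}(𝒜) = 𝒜_{ij}(1-𝒜_{ik})𝒜_{kl}(1-𝒜_{jl})`. -/
def chi (N : ℕ) (A : Matrix (Fin N) (Fin N) ℝ) (i j k l : Fin N) : ℝ :=
  A i j * (1 - A i k) * A k l * (1 - A j l)

/-- `𝓜_{ij}(F(𝒜)) = max_{k,l} |F(𝒜 + ξ_{ij}^{kl})|`. -/
def Mmax (N : ℕ) (i j : Fin N) (F : Matrix (Fin N) (Fin N) ℝ → ℝ)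
    (A : Matrix (Fin N) (Fin N) ℝ) : ℝ :=
  ⨆ p : Fin N × Fin N, |F (A + xiMat N i j p.1 p.2)|

instance matMS (N : ℕ) : MeasurableSpace (Matrix (Fin N) (Fin N) ℝ) :=
  show MeasurableSpace (Fin N → Fin N → ℝ) from inferInstance

/-- the GOE: push-forward of independent centered Gaussians with variance `(1+δ_{ij})/N`
on the upper triangle under the symmetrization map. -/
def goeMeasure (N : ℕ) : Measure (Matrix (Fin N) (Fin N) ℝ) :=
  Measure.map (fun f => Matrix.of fun i j => if i ≤ j then f (i, j) else f (j, i))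
    (Measure.pi fun p : Fin N × Fin N =>
      ProbabilityTheory.gaussianReal 0 (if p.1 = p.2 then 2 / N else 1 / N))

/-- the uniform probability measure on `d`-regular graphs on `N` vertices, as a measure. -/
def uniformReg (N d : ℕ) : Measure (Matrix (Fin N) (Fin N) ℝ) :=
  (Nat.card {A : Matrix (Fin N) (Fin N) ℝ // IsAdjMat N d A} : ℝ≥0∞)⁻¹ •
    Measure.sum fun A : {A : Matrix (Fin N) (Fin N) ℝ // IsAdjMat N d A} =>
      Measure.dirac A.1

/-- the matrix flow `A(t) = e^{-t/2} q⁻¹𝒜 + √(1-e^{-t}) W`, where `W = P⊥ H P⊥`. -/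
def flowMat (N d : ℕ) (A H : Matrix (Fin N) (Fin N) ℝ) (t : ℝ) : Matrix (Fin N) (Fin N) ℝ :=
  Real.exp (-t / 2) • ((qval N d)⁻¹ • A) +
    Real.sqrt (1 - Real.exp (-t)) • (PperpR N * H * PperpR N)

/-- the Green function of the matrix flow, `G(t;z) = P⊥ (A(t) - z)⁻¹ P⊥`. -/
def greenFlow (N d : ℕ) (A H : Matrix (Fin N) (Fin N) ℝ) (t : ℝ) (z : ℂ) :
    Matrix (Fin N) (Fin N) ℂ :=
  Pperp N * ((flowMat N d A H t).map Complex.ofReal - z • 1)⁻¹ * Pperp N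

/-- the normalized trace of the Green function of the flow. -/
def gbarFlow (N d : ℕ) (A H : Matrix (Fin N) (Fin N) ℝ) (t : ℝ) (z : ℂ) : ℂ :=
  (N : ℂ)⁻¹ * (greenFlow N d A H t z).trace

/-!
Since `ξ_{ik}^{jl} = -ξ_{ij}^{kl}`, translations by these two matrices are inverse to each other.
On adjacency matrices `χ_{ij}^{kl}` is the indicator of the graphs that contain the edges `ij`, `kl`
and miss `ik`, `jl`. Translation by `ξ_{ij}^{kl}` replaces the edges `ik`, `jl` by `ij`, `kl` and
preserves all degrees, so it maps the graphs with `χ_{ik}^{jl} = 1` bijectively onto those with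
`χ_{ij}^{kl} = 1`, and both expectations are the same sum over these graphs.
-/

section Switching

variable {N d : ℕ} {i j k l : Fin N} {A : Matrix (Fin N) (Fin N) ℝ}

theorem isAdjMat_iff : IsAdjMat N d A ↔ A.IsAdjMatrix ∧ ∀ x, ∑ y, A x y = d :=
  ⟨fun ⟨hsymm, hdiag, h01, hsum⟩ => ⟨⟨h01, hsymm, hdiag⟩, hsum⟩,
    fun ⟨⟨h01, hsymm, hdiag⟩, hsum⟩ => ⟨hsymm, hdiag, h01, hsum⟩⟩

theorem isSymm_apply_congr {n α : Type*} {M : Matrix n n α} (hM : M.IsSymm) {a b x y : n}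
    (h : s(a, b) = s(x, y)) : M a b = M x y := by
  rcases Sym2.eq_iff.mp h with ⟨rfl, rfl⟩ | ⟨rfl, rfl⟩
  · rfl
  · exact hM.apply _ _

theorem Dmat_isSymm (i j : Fin N) : (Dmat N i j).IsSymm :=
  Matrix.IsSymm.ext fun _ _ => add_comm _ _

theorem Dmat_apply_of_ne (hij : i ≠ j) (x y : Fin N) :
    Dmat N i j x y = if s(i, j) = s(x, y) then 1 else 0 := by
  simp only [Dmat, Matrix.of_apply, Sym2.eq_iff]
  grind

theorem Dmat_apply_diag (hij : i ≠ j) (x : Fin N) : Dmat N i j x x = 0 := by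
  rw [Dmat_apply_of_ne hij, if_neg (by grind)]

theorem sum_Dmat_apply (i j x : Fin N) :
    ∑ y, Dmat N i j x y = (if i = x then 1 else 0) + if j = x then 1 else 0 := by
  simp [Dmat, Finset.sum_add_distrib, ite_and]

theorem isAdjMatrix_add_Dmat (hA : A.IsAdjMatrix) (hij : i ≠ j) (hAij : A i j = 0) :
    (A + Dmat N i j).IsAdjMatrix where
  zero_or_one x y := by
    rw [Matrix.add_apply, Dmat_apply_of_ne hij]
    split_ifs with h
    · simp [← isSymm_apply_congr hA.symm h, hAij]
    · simpa using hA.zero_or_one x y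
  symm := hA.symm.add (Dmat_isSymm i j)
  apply_diag x := by simp [Dmat_apply_diag hij, hA.apply_diag]

theorem isAdjMatrix_sub_Dmat (hA : A.IsAdjMatrix) (hAij : A i j = 1) :
    (A - Dmat N i j).IsAdjMatrix := by
  have hij : i ≠ j := by
    rintro rfl
    exact hA.apply_diag_ne i hAij
  refine ⟨fun x y => ?_, hA.symm.sub (Dmat_isSymm i j), fun x => ?_⟩
  · rw [Matrix.sub_apply, Dmat_apply_of_ne hij]
    split_ifs with h
    · simp [← isSymm_apply_congr hA.symm h, hAij]
    · simpa using hA.zero_or_one x y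
  · simp [Dmat_apply_diag hij, hA.apply_diag]

theorem xiMat_swap (i j k l : Fin N) : xiMat N i k j l = -xiMat N i j k l := by
  simp only [xiMat]
  abel

theorem sum_xiMat_apply (i j k l x : Fin N) : ∑ y, xiMat N i j k l x y = 0 := by
  simp only [xiMat, Matrix.add_apply, Matrix.sub_apply, Finset.sum_add_distrib,
    Finset.sum_sub_distrib, sum_Dmat_apply]
  ring

/-- The adjacency matrices of `d`-regular graphs on `N` vertices that contain the edges `ij`, `kl`
and miss `ik`, `jl`: the event whose indicator is `χ_{ij}^{kl}`. -/
def switchableSet (N d : ℕ) (i j k l : Fin N) : Set (Matrix (Fin N) (Fin N) ℝ) :=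
  {A | IsAdjMat N d A ∧ A i j = 1 ∧ A i k = 0 ∧ A k l = 1 ∧ A j l = 0}

theorem ne_of_mem_switchableSet (hA : A ∈ switchableSet N d i j k l) :
    i ≠ j ∧ i ≠ l ∧ j ≠ k ∧ k ≠ l := by
  obtain ⟨⟨hsymm, hdiag, -⟩, hij, hik, hkl, hjl⟩ := hA
  have hsymm' := hsymm.apply
  grind

theorem mapsTo_add_xiMat (hij : i ≠ j) (hkl : k ≠ l) :
    Set.MapsTo (· + xiMat N i j k l) (switchableSet N d i k j l) (switchableSet N d i j k l) := by
  intro A hA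
  obtain ⟨hik, hil, hkj, hjl⟩ := ne_of_mem_switchableSet hA
  obtain ⟨hreg, hAik, hAij, hAjl, hAkl⟩ := hA
  obtain ⟨hadj, hsum⟩ := isAdjMat_iff.mp hreg
  have hremove : (A - Dmat N i k - Dmat N j l).IsAdjMatrix :=
    isAdjMatrix_sub_Dmat (isAdjMatrix_sub_Dmat hadj hAik) <| by
      simp [Dmat_apply_of_ne, *]
  have hsplit : A + xiMat N i j k l =
      A - Dmat N i k - Dmat N j l + Dmat N i j + Dmat N k l := by
    simp only [xiMat]
    abel
  have hswitch : (A + xiMat N i j k l).IsAdjMatrix := by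
    rw [hsplit]
    refine isAdjMatrix_add_Dmat (isAdjMatrix_add_Dmat hremove hij ?_) hkl ?_ <;>
      simp [Dmat_apply_of_ne, *, hij.symm, hil.symm, hkj.symm, hjl.symm]
  refine ⟨isAdjMat_iff.mpr ⟨hswitch, fun x => ?_⟩, ?_, ?_, ?_, ?_⟩
  · simp [Finset.sum_add_distrib, hsum, sum_xiMat_apply]
  all_goals
    simp [xiMat, Dmat_apply_of_ne, *, hij.symm, hik.symm, hil.symm, hjl.symm, hkj.symm]

theorem bijOn_add_xiMat (hij : i ≠ j) (hik : i ≠ k) (hjl : j ≠ l) (hkl : k ≠ l) :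
    Set.BijOn (· + xiMat N i j k l) (switchableSet N d i k j l) (switchableSet N d i j k l) := by
  have hinv : Set.InvOn (· + xiMat N i k j l) (· + xiMat N i j k l)
      (switchableSet N d i k j l) (switchableSet N d i j k l) := by
    constructor <;> intro A _ <;> simp [xiMat_swap i j k l]
  exact hinv.bijOn (mapsTo_add_xiMat hij hkl) (mapsTo_add_xiMat hik hjl)

theorem chi_eq_indicator (hA : IsAdjMat N d A) (i j k l : Fin N) :
    chi N A i j k l = (switchableSet N d i j k l).indicator 1 A := by
  classical
  have h01 := hA.2.2.1
  rw [Set.indicator_apply]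
  rcases h01 i j with hij | hij <;> rcases h01 i k with hik | hik <;>
    rcases h01 k l with hkl | hkl <;> rcases h01 j l with hjl | hjl <;>
    simp [chi, switchableSet, hA, hij, hik, hkl, hjl]

theorem Ereg_mul_chi (N d : ℕ) (i j k l : Fin N) (F : Matrix (Fin N) (Fin N) ℝ → ℝ) :
    Ereg N d (fun A => F A * chi N A i j k l) =
      (∑ᶠ A ∈ switchableSet N d i j k l, F A) /
        (Nat.card {A : Matrix (Fin N) (Fin N) ℝ // IsAdjMat N d A} : ℝ) := by
  rw [Ereg, finsum_subtype_eq_finsum_cond (f := fun A => F A * chi N A i j k l)]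
  congr 1
  refine finsum_congr fun A => ?_
  by_cases hA : IsAdjMat N d A
  · by_cases hA' : A ∈ switchableSet N d i j k l <;> simp [hA, hA', chi_eq_indicator hA]
  · have hA' : A ∉ switchableSet N d i j k l := fun h => hA h.1
    simp [hA, hA']

end Switching

/-- Invariance of the uniform measure on `d`-regular graphs under local switchings. -/
theorem switching_invariance
    (N d : ℕ) (hd : 1 ≤ d) (hdN : d < N)
    (hne : Nonempty {A : Matrix (Fin N) (Fin N) ℝ // IsAdjMat N d A})
    (i j k l : Fin N) (hij : i ≠ j) (hik : i ≠ k) (hil : i ≠ l)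
    (hjk : j ≠ k) (hjl : j ≠ l) (hkl : k ≠ l)
    (F : Matrix (Fin N) (Fin N) ℝ → ℝ) :
    Ereg N d (fun A => F A * chi N A i j k l) =
      Ereg N d (fun A => F (A + xiMat N i j k l) * chi N A i k j l) := by
  rw [Ereg_mul_chi, Ereg_mul_chi N d i k j l fun A => F (A + xiMat N i j k l)]
  congr 1
  exact (finsum_mem_eq_of_bijOn _ (bijOn_add_xiMat hij hik hjl hkl) fun _ _ => rfl).symm

end
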